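/- arXiv:2402.02459 — 2 statements merged into one kernel-verified Lean document; each statement's English description precedes it below -/
import Mathlib

section
/- Let Σ ∈ S^p_+ be given. For τ > 0 let L̂(τ) be the first component of the unique minimizer of F(L,D) = τ‖L‖_* + (1/2)‖Σ − (L+D)‖_F² over L ∈ S^p_+ and diagonal D, and let L̃ be the (unique) first component of the solution of the MTFA problem: minimize tr(L) over L ∈ S^p_+ and diagonal D subject to Σ = L + D. Then L̂(τ) → L̃ as τ → 0⁺. -/
open Matrix MeasureTheory ProbabilityTheory BigOperators

/-- `pdiag M`: the matrix `M` with all off-diagonal entries set to zero. -/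
def pdiag {p : ℕ} (M : Matrix (Fin p) (Fin p) ℝ) : Matrix (Fin p) (Fin p) ℝ :=
  Matrix.of fun i j => if i = j then M i j else 0

/-- `poffdiag M = M - pdiag M`: the off-diagonal part of `M`. -/
def poffdiag {p : ℕ} (M : Matrix (Fin p) (Fin p) ℝ) : Matrix (Fin p) (Fin p) ℝ :=
  M - pdiag M

/-- Frobenius norm of a real matrix. -/
noncomputable def frobNorm {p q : ℕ} (M : Matrix (Fin p) (Fin q) ℝ) : ℝ :=
  Real.sqrt (∑ i, ∑ j, (M i j) ^ 2)

/-- The singular values of a real matrix (as the square roots of the eigenvalues of `Mᵀ M`,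
in no particular order, with multiplicity, padded by zeros). -/
noncomputable def singVals {p q : ℕ} (M : Matrix (Fin p) (Fin q) ℝ) : Fin q → ℝ :=
  fun i => Real.sqrt ((Matrix.posSemidef_conjTranspose_mul_self M).isHermitian.eigenvalues i)

/-- Nuclear norm: sum of the singular values. -/
noncomputable def nucNorm {p q : ℕ} (M : Matrix (Fin p) (Fin q) ℝ) : ℝ :=
  ∑ i, singVals M i

/-- Spectral (operator) norm: the largest singular value. -/
noncomputable def specNorm {p q : ℕ} (M : Matrix (Fin p) (Fin q) ℝ) : ℝ :=
  ⨆ i, singVals M i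

/-- `(2,∞)`-norm: the maximal Euclidean norm of a row. -/
noncomputable def rowNorm {p r : ℕ} (U : Matrix (Fin p) (Fin r) ℝ) : ℝ :=
  ⨆ i, Real.sqrt (∑ j, (U i j) ^ 2)

/-- `sinΘ` distance between two column-orthonormal matrices, measured in spectral norm:
`‖sinΘ(U, V)‖ = ‖U Uᵀ - V Vᵀ‖`. -/
noncomputable def sinTheta {p r : ℕ} (U V : Matrix (Fin p) (Fin r) ℝ) : ℝ :=
  specNorm (U * Uᵀ - V * Vᵀ)

/-- `eigDesc M k` : the `k`-th largest eigenvalue (1-indexed) of a symmetric matrix `M`. -/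
noncomputable def eigDesc {p : ℕ} (M : Matrix (Fin p) (Fin p) ℝ) (k : ℕ) : ℝ :=
  if h : M.IsHermitian then
    (((List.ofFn h.eigenvalues).insertionSort (· ≥ ·)).getD (k - 1) 0)
  else 0

/-- `svDesc M k` : the `k`-th largest singular value (1-indexed) of `M`. -/
noncomputable def svDesc {p q : ℕ} (M : Matrix (Fin p) (Fin q) ℝ) (k : ℕ) : ℝ :=
  (((List.ofFn (singVals M)).insertionSort (· ≥ ·)).getD (k - 1) 0)

/-- Eigenvalue soft-thresholding operator `D_τ⁺`: for a symmetric matrix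
`M = Σᵢ λᵢ uᵢ uᵢᵀ`, `D_τ⁺(M) = Σᵢ max (λᵢ - τ) 0 • uᵢ uᵢᵀ` (junk value `0` otherwise). -/
noncomputable def softThresh {p : ℕ} (τ : ℝ) (M : Matrix (Fin p) (Fin p) ℝ) :
    Matrix (Fin p) (Fin p) ℝ :=
  if h : M.IsHermitian then
    (h.eigenvectorUnitary : Matrix (Fin p) (Fin p) ℝ) *
      Matrix.diagonal (fun i => max (h.eigenvalues i - τ) 0) *
      (star (h.eigenvectorUnitary : Matrix (Fin p) (Fin p) ℝ))
  else 0

/-- The `p × r` matrix whose columns are (orthonormal) eigenvectors of the symmetric matrix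
`M` corresponding to its `r` largest eigenvalues ("first `r` eigenvectors"). -/
noncomputable def topEigenvectors {p : ℕ} (M : Matrix (Fin p) (Fin p) ℝ) (r : ℕ) :
    Matrix (Fin p) (Fin r) ℝ :=
  if h : M.IsHermitian then
    Matrix.of fun i (j : Fin r) =>
      if hj : (j : ℕ) < p then
        (h.eigenvectorUnitary : Matrix (Fin p) (Fin p) ℝ) i
          ((Tuple.sort h.eigenvalues) (Fin.rev ⟨(j : ℕ), hj⟩))
      else 0
  else 0

/-- The objective function `F(L, D) = τ ‖L‖_* + (1/2) ‖Σ - (L + D)‖_F²`. -/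
noncomputable def objF {p : ℕ} (τ : ℝ) (S L D : Matrix (Fin p) (Fin p) ℝ) : ℝ :=
  τ * nucNorm L + (1 / 2) * (frobNorm (S - (L + D))) ^ 2

/-- `(L, D)` is a global minimizer of the relaxed-MTFA objective `F` over
`L ∈ S^p₊` and diagonal `D`. -/
def IsRMTFAMin {p : ℕ} (τ : ℝ) (S L D : Matrix (Fin p) (Fin p) ℝ) : Prop :=
  L.PosSemidef ∧ D = pdiag D ∧
    ∀ L' D' : Matrix (Fin p) (Fin p) ℝ, L'.PosSemidef → D' = pdiag D' →
      objF τ S L D ≤ objF τ S L' D'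


section helpers
open scoped MatrixOrder Topology
open Filter

lemma nucNorm_of_posSemidef {p : ℕ} {L : Matrix (Fin p) (Fin p) ℝ} (hL : L.PosSemidef) :
    nucNorm L = L.trace := by
  have hP := Matrix.posSemidef_conjTranspose_mul_self L
  have h1 : CFC.sqrt (Lᴴ * L) = L := by
    rw [hL.isHermitian.eq]
    exact CFC.sqrt_mul_self L hL.nonneg
  have h2 : (CFC.sqrt (Lᴴ * L)).trace = nucNorm L := by
    rw [CFC.sqrt_eq_real_sqrt _ hP.nonneg, cfcₙ_eq_cfc, hP.isHermitian.cfc_eq]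
    unfold Matrix.IsHermitian.cfc nucNorm singVals
    rw [Unitary.conjStarAlgAut_apply, Matrix.trace_mul_comm, ← mul_assoc]
    simp [Matrix.trace]
  rw [← h2, h1]

lemma frobNorm_sq {p q : ℕ} (M : Matrix (Fin p) (Fin q) ℝ) :
    frobNorm M ^ 2 = ∑ i, ∑ j, (M i j) ^ 2 := by
  unfold frobNorm
  exact Real.sq_sqrt (Finset.sum_nonneg fun i _ => Finset.sum_nonneg fun j _ => sq_nonneg _)

lemma quad_eq {p : ℕ} (M : Matrix (Fin p) (Fin p) ℝ) (x : Fin p → ℝ) :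
    star x ⬝ᵥ (M *ᵥ x) = ∑ i, ∑ j, x i * (M i j * x j) := by
  simp [dotProduct, Matrix.mulVec, Finset.mul_sum]

lemma psd_of_tendsto {p : ℕ} {F : Filter ℝ} [F.NeBot] {A : ℝ → Matrix (Fin p) (Fin p) ℝ}
    {B : Matrix (Fin p) (Fin p) ℝ} (hA : ∀ᶠ t in F, (A t).PosSemidef)
    (hl : ∀ i j, Tendsto (fun t => A t i j) F (𝓝 (B i j))) : B.PosSemidef := by
  refine Matrix.PosSemidef.of_dotProduct_mulVec_nonneg ?_ ?_
  · ext i j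
    simp only [Matrix.conjTranspose_apply, star_trivial]
    refine tendsto_nhds_unique_of_eventuallyEq (hl j i) (hl i j) ?_
    filter_upwards [hA] with t ht
    simpa using (ht.isHermitian.apply j i).symm
  · intro x
    rw [quad_eq]
    refine ge_of_tendsto (f := fun t => ∑ i, ∑ j, x i * (A t i j * x j)) (x := F) ?_ ?_
    · exact tendsto_finsetSum _ fun i _ => tendsto_finsetSum _ fun j _ =>
        ((hl i j).mul_const _).const_mul _
    · filter_upwards [hA] with t ht
      rw [← quad_eq]
      exact ht.dotProduct_mulVec_nonneg x

lemma psd_mul_eq_zero {p : ℕ} {W L : Matrix (Fin p) (Fin p) ℝ} (hW : W.PosSemidef)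
    (hL : L.PosSemidef) (h : (W * L).trace ≤ 0) : W * L = 0 := by
  obtain ⟨B, rfl⟩ := CStarAlgebra.nonneg_iff_eq_star_mul_self.mp hL.nonneg
  obtain ⟨C, rfl⟩ := CStarAlgebra.nonneg_iff_eq_star_mul_self.mp hW.nonneg
  simp only [Matrix.star_eq_conjTranspose] at *
  have e : (Cᴴ * C * (Bᴴ * B)).trace = ((C * Bᴴ)ᴴ * (C * Bᴴ)).trace := by
    rw [← mul_assoc, Matrix.trace_mul_comm]
    simp [Matrix.conjTranspose_mul, mul_assoc]
  rw [e] at h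
  have h0 := (Matrix.posSemidef_conjTranspose_mul_self (C * Bᴴ)).trace_nonneg
  have hX := Matrix.trace_conjTranspose_mul_self_eq_zero_iff.mp (le_antisymm h h0)
  calc Cᴴ * C * (Bᴴ * B) = Cᴴ * (C * Bᴴ) * B := by simp only [mul_assoc]
    _ = 0 := by rw [hX]; simp

lemma psd_entry_le {p : ℕ} {M : Matrix (Fin p) (Fin p) ℝ} (hM : M.PosSemidef) (i j : Fin p) :
    |M i j| ≤ M.trace := by
  have hd : ∀ k, M k k ≤ M.trace := fun k =>
    Finset.single_le_sum (f := fun k => M k k) (fun k _ => hM.diag_nonneg) (Finset.mem_univ k)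
  have hs : M j i = M i j := by simpa using hM.isHermitian.apply i j
  have h1 := hM.dotProduct_mulVec_nonneg (Pi.single i 1 + Pi.single j 1)
  have h2 := hM.dotProduct_mulVec_nonneg (Pi.single i 1 - Pi.single j 1)
  simp [Matrix.mulVec_add, Matrix.mulVec_sub, dotProduct_add, add_dotProduct, sub_dotProduct,
    dotProduct_sub] at h1 h2
  have := hd i
  have := hd j
  rw [abs_le]
  constructor <;> linarith

lemma nonneg_of_quad {a b : ℝ} (hb : 0 ≤ b)
    (h : ∀ t : ℝ, 0 < t → t ≤ 1 → 0 ≤ t * a + t ^ 2 * b) : 0 ≤ a := by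
  have hl : Tendsto (fun t : ℝ => a + t * b) (𝓝[>] 0) (𝓝 a) := by
    have : Tendsto (fun t : ℝ => a + t * b) (𝓝 0) (𝓝 (a + 0 * b)) := by
      apply Continuous.tendsto; fun_prop
    simpa using this.mono_left nhdsWithin_le_nhds
  refine ge_of_tendsto hl ?_
  filter_upwards [Ioc_mem_nhdsGT (zero_lt_one (α := ℝ))] with t ht
  have h1 := h t ht.1 ht.2
  have : 0 ≤ t * (a + t * b) := by nlinarith
  exact nonneg_of_mul_nonneg_right this ht.1

lemma pdiag_eq_iff {p : ℕ} {D : Matrix (Fin p) (Fin p) ℝ} :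
    D = pdiag D ↔ ∀ i j, i ≠ j → D i j = 0 := by
  constructor
  · intro h i j hij
    rw [h]; simp [pdiag, hij]
  · intro h
    ext i j
    by_cases hij : i = j
    · simp [pdiag, hij]
    · simp [pdiag, hij, h i j hij]

lemma variational {p : ℕ} {τ : ℝ} {S L D : Matrix (Fin p) (Fin p) ℝ}
    (hm : IsRMTFAMin τ S L D) {L' D' : Matrix (Fin p) (Fin p) ℝ} (hL' : L'.PosSemidef)
    (hD' : D' = pdiag D') :
    0 ≤ τ * (L'.trace - L.trace) +
      ∑ i, ∑ j, (L + D - S) i j * ((L' - L) i j + (D' - D) i j) := by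
  obtain ⟨hL, hD, hmin⟩ := hm
  refine nonneg_of_quad
    (b := 1 / 2 * ∑ i, ∑ j, ((L' - L) i j + (D' - D) i j) ^ 2) ?_ ?_
  · have : 0 ≤ ∑ i, ∑ j, ((L' - L) i j + (D' - D) i j) ^ 2 :=
      Finset.sum_nonneg fun i _ => Finset.sum_nonneg fun j _ => sq_nonneg _
    linarith
  · intro t ht ht1
    have hP : (L + t • (L' - L)).PosSemidef := by
      have : L + t • (L' - L) = (1 - t) • L + t • L' := by
        rw [smul_sub, sub_smul, one_smul]; abel
      rw [this]
      exact (hL.smul (by linarith)).add (hL'.smul ht.le)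
    have hDd : D + t • (D' - D) = pdiag (D + t • (D' - D)) := by
      rw [pdiag_eq_iff] at *
      intro i j hij
      simp [hD i j hij, hD' i j hij]
    have h := hmin _ _ hP hDd
    unfold objF at h
    rw [nucNorm_of_posSemidef hL, nucNorm_of_posSemidef hP, frobNorm_sq, frobNorm_sq] at h
    have e : ∑ i, ∑ j, ((S - (L + t • (L' - L) + (D + t • (D' - D)))) i j) ^ 2
        = ∑ i, ∑ j, ((S - (L + D)) i j) ^ 2
        + 2 * t * ∑ i, ∑ j, (L + D - S) i j * ((L' - L) i j + (D' - D) i j)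
        + t ^ 2 * ∑ i, ∑ j, ((L' - L) i j + (D' - D) i j) ^ 2 := by
      simp only [Finset.mul_sum, ← Finset.sum_add_distrib]
      refine Finset.sum_congr rfl fun i _ => Finset.sum_congr rfl fun j _ => ?_
      simp only [Matrix.sub_apply, Matrix.add_apply, Matrix.smul_apply, smul_eq_mul]
      ring
    rw [e] at h
    simp only [Matrix.trace_add, Matrix.trace_smul, Matrix.trace_sub, smul_eq_mul] at h
    nlinarith

/-- Dual certificate extracted from the optimality conditions. -/
lemma dual_cert {p : ℕ} {τ : ℝ} (hτ : 0 < τ) {S L D : Matrix (Fin p) (Fin p) ℝ}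
    (hS : S.PosSemidef) (hm : IsRMTFAMin τ S L D) :
    ∃ W : Matrix (Fin p) (Fin p) ℝ, W.PosSemidef ∧ (∀ i, W i i = 1) ∧ (W * L).trace ≤ 0 ∧
      L + D - S = τ • (W - 1) := by
  have hL := hm.1
  have hD := hm.2.1
  have hDs : D.IsHermitian := by
    rw [hD]
    ext i j
    by_cases h : i = j
    · simp [h]
    · simp [pdiag, h, Ne.symm h]
  have hτ0 := hτ.ne'
  set R := L + D - S with hR
  have hRs : R.IsHermitian := (hL.isHermitian.add hDs).sub hS.isHermitian
  refine ⟨1 + τ⁻¹ • R, ?_, ?_, ?_, ?_⟩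
  · refine Matrix.PosSemidef.of_dotProduct_mulVec_nonneg ?_ ?_
    · refine Matrix.isHermitian_one.add ?_
      ext i j
      have := congrFun (congrFun hRs i) j
      simp only [Matrix.conjTranspose_apply, Matrix.smul_apply] at this ⊢
      simp only [star_trivial, smul_eq_mul] at this ⊢
      rw [this]
    · intro x
      have hP : (L + Matrix.vecMulVec x (star x)).PosSemidef :=
        hL.add (Matrix.posSemidef_vecMulVec_self_star x)
      have h := variational hm hP hD
      rw [← hR] at h
      have e : τ * ∑ i, ∑ j, x i * ((1 + τ⁻¹ • R) i j * x j) =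
        τ * ((L + Matrix.vecMulVec x (star x)).trace - L.trace) +
         ∑ i, ∑ j, R i j * ((L + Matrix.vecMulVec x (star x) - L) i j + (D - D) i j) := by
        have e1 : ∑ i, ∑ j, R i j * ((L + Matrix.vecMulVec x (star x) - L) i j + (D - D) i j)
            = ∑ i, ∑ j, τ * (x i * ((τ⁻¹ * R i j) * x j)) := by
          refine Finset.sum_congr rfl fun i _ => Finset.sum_congr rfl fun j _ => ?_
          simp [Matrix.vecMulVec_apply]
          field_simp
        have e2 : (L + Matrix.vecMulVec x (star x)).trace - L.trace
            = ∑ i, ∑ j, x i * ((1 : Matrix (Fin p) (Fin p) ℝ) i j * x j) := by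
          simp [Matrix.trace, Matrix.vecMulVec_apply, Matrix.one_apply, Finset.sum_add_distrib]
        rw [e1, e2]
        simp only [Finset.mul_sum, ← Finset.sum_add_distrib]
        refine Finset.sum_congr rfl fun i _ => Finset.sum_congr rfl fun j _ => ?_
        simp only [Matrix.add_apply, Matrix.smul_apply, smul_eq_mul]
        ring
      rw [← e] at h
      rw [quad_eq]
      exact nonneg_of_mul_nonneg_right h hτ
  · have hd : D - pdiag R = pdiag (D - pdiag R) := by
      rw [pdiag_eq_iff] at *
      intro i j hij
      simp [pdiag, hij, hD i j hij]
    have h := variational hm hL hd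
    rw [← hR] at h
    have e : ∑ i, ∑ j, R i j * ((L - L) i j + (D - pdiag R - D) i j) = - ∑ i, R i i ^ 2 := by
      rw [← Finset.sum_neg_distrib]
      refine Finset.sum_congr rfl fun i _ => ?_
      simp [pdiag]
      ring
    rw [e] at h
    have h0 : ∑ i, R i i ^ 2 = 0 :=
      le_antisymm (by linarith) (Finset.sum_nonneg fun i _ => sq_nonneg _)
    rw [Finset.sum_eq_zero_iff_of_nonneg (fun i _ => sq_nonneg _)] at h0
    intro i
    have := h0 i (Finset.mem_univ i)
    simp at this
    simp [this]
  · have h := variational hm (Matrix.PosSemidef.zero (n := Fin p) (R := ℝ)) hD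
    rw [← hR] at h
    have e : ∑ i, ∑ j, R i j * ((0 - L) i j + (D - D) i j) = - (R * L).trace := by
      simp only [Matrix.trace, Matrix.diag, Matrix.mul_apply, ← Finset.sum_neg_distrib]
      refine Finset.sum_congr rfl fun i _ => Finset.sum_congr rfl fun j _ => ?_
      have hs : L j i = L i j := by simpa using hL.isHermitian.apply i j
      simp [hs]
    rw [e] at h
    simp only [Matrix.trace_zero] at h
    simp only [add_mul, one_mul, Matrix.trace_add, smul_mul_assoc, Matrix.trace_smul, smul_eq_mul]
    have : L.trace + τ⁻¹ * (R * L).trace = τ⁻¹ * (τ * L.trace + (R * L).trace) := by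
      field_simp
    rw [this]
    exact mul_nonpos_of_nonneg_of_nonpos (inv_nonneg.mpr hτ.le) (by linarith)
  · simp [smul_smul, hτ0]

lemma trace_le {p : ℕ} {τ : ℝ} (hτ : 0 < τ) {S L D L₀ D₀ : Matrix (Fin p) (Fin p) ℝ}
    (hm : IsRMTFAMin τ S L D) (hL₀ : L₀.PosSemidef) (hD₀ : D₀ = pdiag D₀) (h : S = L₀ + D₀) :
    L.trace ≤ L₀.trace := by
  have h1 := hm.2.2 L₀ D₀ hL₀ hD₀
  unfold objF at h1
  rw [nucNorm_of_posSemidef hm.1, nucNorm_of_posSemidef hL₀, frobNorm_sq (S - (L₀ + D₀)),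
    ← h] at h1
  simp at h1
  have := sq_nonneg (frobNorm (S - (L + D)))
  exact le_of_mul_le_mul_left (by linarith) hτ

/-- Limit identification. -/
lemma limit_unique {p : ℕ} {W L L₀ : Matrix (Fin p) (Fin p) ℝ} (hW : W.PosSemidef)
    (hW1 : ∀ i, W i i = 1) (hL : L.PosSemidef) (hL₀ : L₀.PosSemidef)
    (hWL : (W * L).trace ≤ 0) (ht : L₀.trace ≤ L.trace)
    (hoff : ∀ i j, i ≠ j → L i j = L₀ i j) : L = L₀ := by
  have hΔ : L - L₀ = Matrix.diagonal fun i => (L - L₀) i i := by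
    ext i j
    by_cases h : i = j
    · simp [h]
    · simp [h, hoff i j h]
  have e : (W * (L - L₀)).trace = L.trace - L₀.trace := by
    rw [hΔ]
    simp [Matrix.trace, hW1]
  have h0 : (W * L₀).trace ≤ 0 := by
    rw [mul_sub, Matrix.trace_sub] at e
    linarith
  have z : W * (L - L₀) = 0 := by
    rw [mul_sub, psd_mul_eq_zero hW hL hWL, psd_mul_eq_zero hW hL₀ h0, sub_zero]
  ext i j
  by_cases h : i = j
  · subst h
    rw [hΔ] at z
    have := congrFun (congrFun z i) i
    simp [hW1] at this
    linarith
  · exact hoff i j h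

lemma exists_ultra_limit (U : Ultrafilter ℝ) {f : ℝ → ℝ} {c : ℝ}
    (h : ∀ᶠ t in (U : Filter ℝ), |f t| ≤ c) : ∃ a, Tendsto f U (𝓝 a) := by
  have hc := (isCompact_Icc (a := -c) (b := c))
  obtain ⟨a, -, ha⟩ := isCompact_iff_ultrafilter_le_nhds'.mp hc (U.map f) (by
    rw [Ultrafilter.mem_map]
    exact h.mono fun t ht => abs_le.mp ht)
  exact ⟨a, ha⟩

end helpers

/-- As `τ → 0⁺`, the relaxed-MTFA solution `L̂(τ)` converges to the
MTFA solution `L̃` (minimizing `tr L` over `L ∈ S^p₊`, `D` diagonal, `Σ = L + D`). -/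
theorem rmtfa_tendsto_mtfa (p : ℕ) (S : Matrix (Fin p) (Fin p) ℝ) (hS : S.PosSemidef)
    (Lhat Dhat : ℝ → Matrix (Fin p) (Fin p) ℝ)
    (hmin : ∀ τ : ℝ, 0 < τ → IsRMTFAMin τ S (Lhat τ) (Dhat τ))
    (Ltilde Dtilde : Matrix (Fin p) (Fin p) ℝ)
    (hLt : Ltilde.PosSemidef) (hDt : Dtilde = pdiag Dtilde) (hdec : S = Ltilde + Dtilde)
    (hopt : ∀ L D : Matrix (Fin p) (Fin p) ℝ,
      L.PosSemidef → D = pdiag D → S = L + D → Ltilde.trace ≤ L.trace) :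
    ∀ ε : ℝ, 0 < ε → ∃ δ : ℝ, 0 < δ ∧ ∀ τ : ℝ, 0 < τ → τ < δ →
      frobNorm (Lhat τ - Ltilde) < ε := by
  have key : ∀ i j, Filter.Tendsto (fun τ => Lhat τ i j) (nhdsWithin 0 (Set.Ioi 0))
      (nhds (Ltilde i j)) := by
    intro i₀ j₀
    rw [Filter.tendsto_iff_ultrafilter]
    intro U hU
    have hpos : ∀ᶠ τ in (U : Filter ℝ), 0 < τ := hU self_mem_nhdsWithin
    have hcert : ∀ τ : ℝ, ∃ W : Matrix (Fin p) (Fin p) ℝ, 0 < τ →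
        (W.PosSemidef ∧ (∀ i, W i i = 1) ∧ (W * Lhat τ).trace ≤ 0 ∧
          Lhat τ + Dhat τ - S = τ • (W - 1)) := by
      intro τ
      by_cases h : 0 < τ
      · obtain ⟨W, hW⟩ := dual_cert h hS (hmin τ h)
        exact ⟨W, fun _ => hW⟩
      · exact ⟨0, fun h' => absurd h' h⟩
    choose W hW using hcert
    have hWlim : ∀ i j, ∃ a, Filter.Tendsto (fun τ => W τ i j) U (nhds a) := by
      intro i j
      refine exists_ultra_limit U (c := p) ?_
      filter_upwards [hpos] with τ hτ
      refine (psd_entry_le (hW τ hτ).1 i j).trans ?_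
      simp [Matrix.trace, (hW τ hτ).2.1]
    have hLlim : ∀ i j, ∃ a, Filter.Tendsto (fun τ => Lhat τ i j) U (nhds a) := by
      intro i j
      refine exists_ultra_limit U (c := Ltilde.trace) ?_
      filter_upwards [hpos] with τ hτ
      exact (psd_entry_le (hmin τ hτ).1 i j).trans (trace_le hτ (hmin τ hτ) hLt hDt hdec)
    choose W₁ hW₁ using hWlim
    choose L₁ hL₁ using hLlim
    have hτ0 : Filter.Tendsto (fun τ : ℝ => τ) U (nhds 0) :=
      hU.trans nhdsWithin_le_nhds
    have hWp : (Matrix.of W₁).PosSemidef :=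
      psd_of_tendsto (hpos.mono fun τ hτ => (hW τ hτ).1) hW₁
    have hLp : (Matrix.of L₁).PosSemidef :=
      psd_of_tendsto (hpos.mono fun τ hτ => (hmin τ hτ).1) hL₁
    have hWd : ∀ i, Matrix.of W₁ i i = 1 := by
      intro i
      refine tendsto_nhds_unique_of_eventuallyEq (hW₁ i i) tendsto_const_nhds ?_
      filter_upwards [hpos] with τ hτ
      exact (hW τ hτ).2.1 i
    have hWL : (Matrix.of W₁ * Matrix.of L₁).trace ≤ 0 := by
      refine le_of_tendsto (x := (U : Filter ℝ)) (f := fun τ => (W τ * Lhat τ).trace) ?_ ?_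
      · simp only [Matrix.trace, Matrix.diag, Matrix.mul_apply]
        exact tendsto_finsetSum _ fun i _ => tendsto_finsetSum _ fun j _ =>
          (hW₁ i j).mul (hL₁ j i)
      · exact hpos.mono fun τ hτ => (hW τ hτ).2.2.1
    have hoffS : ∀ i j, i ≠ j → L₁ i j = S i j := by
      intro i j hij
      have h1 : Filter.Tendsto (fun τ => S i j + τ * W τ i j) U (nhds (S i j + 0 * W₁ i j)) :=
        (hτ0.mul (hW₁ i j)).const_add _
      rw [zero_mul, add_zero] at h1
      refine tendsto_nhds_unique_of_eventuallyEq (hL₁ i j) h1 ?_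
      filter_upwards [hpos] with τ hτ
      have h2 := congrFun (congrFun (hW τ hτ).2.2.2 i) j
      simp [pdiag_eq_iff.mp (hmin τ hτ).2.1 i j hij, Matrix.one_apply, hij] at h2
      linarith
    have hoff : ∀ i j, i ≠ j → Matrix.of L₁ i j = Ltilde i j := by
      intro i j hij
      have h2 := congrFun (congrFun hdec i) j
      simp [pdiag_eq_iff.mp hDt i j hij] at h2
      simp [hoffS i j hij, h2]
    have htr : Ltilde.trace ≤ (Matrix.of L₁).trace := by
      refine hopt _ (S - Matrix.of L₁) hLp ?_ (by abel)
      rw [pdiag_eq_iff]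
      intro i j hij
      simp [hoffS i j hij]
    have := limit_unique hWp hWd hLp hLt hWL htr hoff
    rw [← this]
    exact hL₁ i₀ j₀
  have hf : Filter.Tendsto (fun τ => frobNorm (Lhat τ - Ltilde)) (nhdsWithin 0 (Set.Ioi 0))
      (nhds 0) := by
    unfold frobNorm
    have : Filter.Tendsto (fun τ => Real.sqrt (∑ i, ∑ j, ((Lhat τ - Ltilde) i j) ^ 2))
        (nhdsWithin 0 (Set.Ioi 0))
        (nhds (Real.sqrt (∑ i, ∑ j, (Ltilde i j - Ltilde i j) ^ 2))) :=
      (tendsto_finsetSum _ fun i _ => tendsto_finsetSum _ fun j _ =>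
        ((key i j).sub_const _).pow 2).sqrt
    simpa using this
  intro ε hε
  have h1 := hf.eventually (gt_mem_nhds hε)
  obtain ⟨δ, hδ, h2⟩ := mem_nhdsGT_iff_exists_Ioo_subset.mp h1
  exact ⟨δ, hδ, fun τ h0 hlt => h2 ⟨h0, hlt⟩⟩
end

section
/- Let Σ ∈ S^p, and for τ > 0 let (L̂(τ), D̂(τ)) be the unique minimizer of F(L,D) = τ‖L‖_* + (1/2)‖Σ − (L+D)‖_F² over L ∈ S^p_+ and diagonal D. Then the map τ ↦ (L̂(τ), D̂(τ)) is continuous on (0, ∞). -/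
open Matrix MeasureTheory ProbabilityTheory BigOperators

open Filter Topology

lemma aux_nuc {p : ℕ} (L : Matrix (Fin p) (Fin p) ℝ) (hL : L.PosSemidef) :
    nucNorm L = L.trace := by
  have hH := hL.isHermitian
  have hQ := (Matrix.posSemidef_conjTranspose_mul_self L).isHermitian
  have hchar : (Lᴴ * L).charpoly =
      (Matrix.diagonal (fun i => hH.eigenvalues i ^ 2)).charpoly := by
    have h1 : Lᴴ * L = Unitary.conjStarAlgAut ℝ _ hH.eigenvectorUnitary
        (diagonal (fun i => hH.eigenvalues i ^ 2)) := by
      have h2 : diagonal (fun i => hH.eigenvalues i ^ 2) =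
          diagonal (RCLike.ofReal ∘ hH.eigenvalues) *
            diagonal ((RCLike.ofReal : ℝ → ℝ) ∘ hH.eigenvalues) := by
        rw [diagonal_mul_diagonal]
        congr 1
        funext i
        simp [sq]
      rw [h2, map_mul, ← hH.spectral_theorem, hH.eq]
    rw [h1, Unitary.conjStarAlgAut_apply, charpoly_mul_comm, ← mul_assoc]
    simp
  have hr := hQ.roots_charpoly_eq_eigenvalues
  rw [hchar, charpoly_diagonal, Polynomial.roots_prod _ _ (by
    rw [Finset.prod_ne_zero_iff]
    exact fun i _ => Polynomial.X_sub_C_ne_zero _)] at hr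
  simp only [Polynomial.roots_X_sub_C, Multiset.bind_singleton] at hr
  have hs := congrArg (fun m => (m.map Real.sqrt).sum) hr
  simp only [Multiset.map_map] at hs
  rw [hH.trace_eq_sum_eigenvalues]
  unfold nucNorm singVals
  refine Eq.trans hs.symm ?_
  change ∑ i, Real.sqrt (hH.eigenvalues i ^ 2) = _
  refine Finset.sum_congr rfl fun i _ => ?_
  rw [Real.sqrt_sq (hL.eigenvalues_nonneg i)]
  rfl

lemma aux_frob {p : ℕ} (M : Matrix (Fin p) (Fin p) ℝ) :
    frobNorm M ^ 2 = ∑ i, ∑ j, M i j ^ 2 := by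
  unfold frobNorm
  rw [Real.sq_sqrt]
  positivity

lemma aux_obj {p : ℕ} (τ : ℝ) (S L D : Matrix (Fin p) (Fin p) ℝ) (hL : L.PosSemidef) :
    objF τ S L D = τ * L.trace + (1 / 2) * ∑ i, ∑ j, (S - (L + D)) i j ^ 2 := by
  unfold objF
  rw [aux_nuc L hL, aux_frob]

lemma aux_lin {a c : ℝ} (h : ∀ t : ℝ, 0 < t → t ≤ 1 → 0 ≤ t * a + t ^ 2 * c) : 0 ≤ a := by
  have h1 : Tendsto (fun t : ℝ => a + t * c) (𝓝[>] 0) (𝓝 (a + 0 * c)) := by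
    apply Tendsto.mono_left _ nhdsWithin_le_nhds
    exact (Continuous.tendsto (by fun_prop) 0)
  have h2 : 0 ≤ a + 0 * c := by
    refine ge_of_tendsto h1 ?_
    filter_upwards [Ioc_mem_nhdsGT (show (0:ℝ) < 1 by norm_num)] with t ht
    have := h t ht.1 ht.2
    have h3 : 0 ≤ t * (a + t * c) := by nlinarith
    exact nonneg_of_mul_nonneg_right h3 ht.1
  simpa using h2

lemma aux_diag {p : ℕ} {τ : ℝ} {S L D : Matrix (Fin p) (Fin p) ℝ}
    (h : IsRMTFAMin τ S L D) : D = pdiag (S - L) := by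
  obtain ⟨hL, hD, hm⟩ := h
  have hoff : ∀ i j, i ≠ j → D i j = 0 := by
    intro i j hij
    rw [hD]; simp [pdiag, hij]
  have h1 := hm L (pdiag (S - L)) hL (by ext i j; by_cases hij : i = j <;> simp [pdiag, hij])
  rw [aux_obj _ _ _ _ hL, aux_obj _ _ _ _ hL] at h1
  have h2 : ∑ i, ∑ j, (S - (L + D)) i j ^ 2 =
      ∑ i, ∑ j, (S - (L + pdiag (S - L))) i j ^ 2 + ∑ i, (S i i - L i i - D i i) ^ 2 := by
    rw [← Finset.sum_add_distrib]
    refine Finset.sum_congr rfl fun i _ => ?_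
    have : (S i i - L i i - D i i) ^ 2 =
        ∑ j, if i = j then (S i j - L i j - D i j) ^ 2 else 0 := by simp
    rw [this, ← Finset.sum_add_distrib]
    refine Finset.sum_congr rfl fun j _ => ?_
    by_cases hij : i = j
    · subst hij; simp [pdiag]; ring
    · simp [pdiag, hij, hoff i j hij]
  have h3 : ∑ i, (S i i - L i i - D i i) ^ 2 ≤ 0 := by linarith
  have h4 : ∑ i, (S i i - L i i - D i i) ^ 2 = 0 := le_antisymm h3 (by positivity)
  rw [Finset.sum_eq_zero_iff_of_nonneg (fun i _ => sq_nonneg _)] at h4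
  ext i j
  by_cases hij : i = j
  · subst hij
    have := h4 i (Finset.mem_univ _)
    have := pow_eq_zero_iff (two_ne_zero) |>.1 this
    simp [pdiag]; linarith
  · simp [pdiag, hij, hoff i j hij]

lemma aux_vi {p : ℕ} {τ : ℝ} {S L D : Matrix (Fin p) (Fin p) ℝ}
    (h : IsRMTFAMin τ S L D) (L' : Matrix (Fin p) (Fin p) ℝ) (hL' : L'.PosSemidef) :
    0 ≤ τ * (L' - L).trace - ∑ i, ∑ j, poffdiag (S - L) i j * (L' - L) i j := by
  have hD := aux_diag h
  obtain ⟨hL, hD0, hm⟩ := h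
  apply aux_lin (c := 1 / 2 * ∑ i, ∑ j, (L' - L) i j ^ 2)
  intro t ht ht1
  have hP : (L + t • (L' - L)).PosSemidef := by
    have : L + t • (L' - L) = (1 - t) • L + t • L' := by
      rw [smul_sub, sub_smul, one_smul]; abel
    rw [this]
    exact (hL.smul (by linarith)).add (hL'.smul ht.le)
  have h1 := hm _ D hP hD0
  rw [aux_obj _ _ _ _ hL, aux_obj _ _ _ _ hP] at h1
  have h2 : ∑ i, ∑ j, (S - (L + t • (L' - L) + D)) i j ^ 2 =
      ∑ i, ∑ j, (S - (L + D)) i j ^ 2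
        - 2 * t * ∑ i, ∑ j, poffdiag (S - L) i j * (L' - L) i j
        + t ^ 2 * ∑ i, ∑ j, (L' - L) i j ^ 2 := by
    simp only [Finset.mul_sum, ← Finset.sum_add_distrib, ← Finset.sum_sub_distrib]
    refine Finset.sum_congr rfl fun i _ => Finset.sum_congr rfl fun j _ => ?_
    have : poffdiag (S - L) i j = S i j - L i j - D i j := by rw [hD]; simp [poffdiag]
    rw [this]
    simp
    ring
  rw [h2, trace_add, trace_smul, smul_eq_mul] at h1
  nlinarith

/-- the gradient at the minimizer -/
noncomputable def auxG {p : ℕ} (τ : ℝ) (S L : Matrix (Fin p) (Fin p) ℝ) :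
    Matrix (Fin p) (Fin p) ℝ := τ • (1 : Matrix (Fin p) (Fin p) ℝ) - poffdiag (S - L)

lemma aux_Gsymm {p : ℕ} (τ : ℝ) (S L : Matrix (Fin p) (Fin p) ℝ) (hS : S.IsHermitian)
    (hL : L.IsHermitian) : (auxG τ S L)ᵀ = auxG τ S L := by
  ext i j
  have h1 := hS.apply i j
  have h2 := hL.apply i j
  simp only [star_trivial] at h1 h2
  by_cases hij : i = j
  · subst hij; rfl
  · simp [auxG, poffdiag, pdiag, hij, Ne.symm hij, one_apply, h1, h2]

lemma aux_trace {p : ℕ} (τ : ℝ) (S L X : Matrix (Fin p) (Fin p) ℝ) (hX : Xᵀ = X) :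
    (auxG τ S L * X).trace = τ * X.trace - ∑ i, ∑ j, poffdiag (S - L) i j * X i j := by
  rw [auxG, sub_mul, trace_sub, smul_mul_assoc, one_mul, trace_smul, smul_eq_mul]
  congr 1
  simp only [trace, diag, mul_apply]
  refine Finset.sum_congr rfl fun i _ => Finset.sum_congr rfl fun j _ => ?_
  rw [← transpose_apply X, hX]

lemma aux_GL {p : ℕ} {τ : ℝ} {S L D : Matrix (Fin p) (Fin p) ℝ} (hS : S.IsHermitian)
    (h : IsRMTFAMin τ S L D) : auxG τ S L * L = 0 := by
  have hL := h.1
  have hLt : Lᵀ = L := hL.isHermitian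
  set G := auxG τ S L with hG
  have hGt : Gᵀ = G := aux_Gsymm τ S L hS hL.isHermitian
  set X := G * L with hX
  have hXt : Xᵀ = L * G := by rw [hX, transpose_mul, hLt, hGt]
  have key : 0 ≤ -2 * (Xᵀ * X).trace := by
    apply aux_lin (c := (G * (X * L * Xᵀ)).trace)
    intro t ht ht1
    have hP : ((1 - t • X) * L * (1 - t • X)ᴴ).PosSemidef := hL.mul_mul_conjTranspose_same _
    have hv := aux_vi h _ hP
    rw [conjTranspose_eq_transpose_of_trivial] at hP hv
    rw [← aux_trace _ _ _ _ (by
      rw [transpose_sub, hLt]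
      congr 1
      exact hP.isHermitian)] at hv
    have e : (1 - t • X) * L * (1 - t • X)ᵀ - L =
        t ^ 2 • (X * L * Xᵀ) - t • (X * L) - t • (L * Xᵀ) := by
      simp only [transpose_sub, transpose_one, transpose_smul, sub_mul, mul_sub, one_mul, mul_one,
        smul_mul_assoc, mul_smul_comm, smul_sub, smul_smul, sq]
      abel
    rw [e, ← hG, mul_sub, mul_sub, trace_sub, trace_sub] at hv
    simp only [mul_smul_comm, trace_smul, smul_eq_mul] at hv
    have e1 : (G * (X * L)).trace = (Xᵀ * X).trace := by
      rw [trace_mul_comm, mul_assoc, ← hXt, trace_mul_comm]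
    have e2 : (G * (L * Xᵀ)).trace = (Xᵀ * X).trace := by
      rw [← mul_assoc, ← hX, trace_mul_comm]
    rw [e1, e2] at hv
    linarith
  have hnn : (Xᵀ * X).trace = ∑ i, ∑ j, X j i ^ 2 := by
    simp [trace, mul_apply, sq]
  have h0 : ∑ i, ∑ j, X j i ^ 2 = 0 := le_antisymm (by linarith) (by positivity)
  rw [Finset.sum_eq_zero_iff_of_nonneg (fun i _ => by positivity)] at h0
  ext i j
  have h1 := h0 j (Finset.mem_univ _)
  rw [Finset.sum_eq_zero_iff_of_nonneg (fun i _ => by positivity)] at h1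
  simpa using h1 i (Finset.mem_univ _)

lemma aux_mono {p : ℕ} {τ₁ τ₂ : ℝ} {S L₁ D₁ L₂ D₂ : Matrix (Fin p) (Fin p) ℝ}
    (h₁ : IsRMTFAMin τ₁ S L₁ D₁) (h₂ : IsRMTFAMin τ₂ S L₂ D₂) :
    ∑ i, ∑ j, poffdiag (L₂ - L₁) i j ^ 2 ≤ (τ₁ - τ₂) * (L₂.trace - L₁.trace) := by
  have v1 := aux_vi h₁ _ h₂.1
  have v2 := aux_vi h₂ _ h₁.1
  rw [trace_sub] at v1 v2
  have e : ∑ i, ∑ j, poffdiag (L₂ - L₁) i j ^ 2 =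
      ∑ i, ∑ j, poffdiag (S - L₁) i j * (L₂ - L₁) i j +
      ∑ i, ∑ j, poffdiag (S - L₂) i j * (L₁ - L₂) i j := by
    simp only [← Finset.sum_add_distrib]
    refine Finset.sum_congr rfl fun i _ => Finset.sum_congr rfl fun j _ => ?_
    by_cases hij : i = j <;> simp [poffdiag, pdiag, hij]
    ring
  linarith

lemma aux_tr {p : ℕ} {τ : ℝ} {S L D : Matrix (Fin p) (Fin p) ℝ}
    (h : IsRMTFAMin τ S L D) : τ * L.trace ≤ 1 / 2 * ∑ i, ∑ j, S i j ^ 2 := by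
  have h1 := h.2.2 0 0 PosSemidef.zero (by ext i j; simp [pdiag])
  rw [aux_obj _ _ _ _ h.1, aux_obj _ _ _ _ PosSemidef.zero] at h1
  have : 0 ≤ ∑ i, ∑ j, (S - (L + D)) i j ^ 2 := by positivity
  simp at h1 this ⊢
  linarith

lemma aux_tm {p : ℕ} {l : Filter ℝ} {f : ℝ → Matrix (Fin p) (Fin p) ℝ}
    {M : Matrix (Fin p) (Fin p) ℝ} (h : ∀ i j, Tendsto (fun x => f x i j) l (𝓝 (M i j))) :
    Tendsto f l (𝓝 M) :=
  tendsto_pi_nhds.2 fun i => tendsto_pi_nhds.2 fun j => h i j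

lemma aux_te {p : ℕ} {l : Filter ℝ} {f : ℝ → Matrix (Fin p) (Fin p) ℝ}
    {M : Matrix (Fin p) (Fin p) ℝ} (h : Tendsto f l (𝓝 M)) (i j : Fin p) :
    Tendsto (fun x => f x i j) l (𝓝 (M i j)) :=
  tendsto_pi_nhds.1 (tendsto_pi_nhds.1 h i) j

lemma aux_tendsto {p : ℕ} {S : Matrix (Fin p) (Fin p) ℝ}
    (hS : S.IsHermitian)
    {Lhat Dhat : ℝ → Matrix (Fin p) (Fin p) ℝ}
    (hmin : ∀ τ : ℝ, 0 < τ → IsRMTFAMin τ S (Lhat τ) (Dhat τ)) {τ : ℝ} (hτ : 0 < τ) :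
    Tendsto Lhat (𝓝 τ) (𝓝 (Lhat τ)) := by
  set C := 1 / 2 * ∑ i, ∑ j, S i j ^ 2 with hC
  have hC0 : 0 ≤ C := by positivity
  have hid : Tendsto (fun x : ℝ => x) (𝓝 τ) (𝓝 τ) := tendsto_id
  have hpos : ∀ᶠ x in 𝓝 τ, τ / 2 < x := lt_mem_nhds (by linarith)
  have hbd : ∀ x, τ / 2 < x → |(Lhat x).trace| ≤ 2 * C / τ := by
    intro x hx
    have hx0 : 0 < x := by linarith
    have h1 := aux_tr (hmin x hx0)
    have h2 := (hmin x hx0).1.trace_nonneg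
    rw [abs_of_nonneg h2, le_div_iff₀ hτ]
    nlinarith
  have hoffsq : ∀ i j, Tendsto (fun x => poffdiag (Lhat x - Lhat τ) i j ^ 2) (𝓝 τ) (𝓝 0) := by
    intro i j
    have hb : Tendsto (fun x => |τ - x| * (4 * C / τ)) (𝓝 τ) (𝓝 0) := by
      have : Tendsto (fun x => |τ - x| * (4 * C / τ)) (𝓝 τ) (𝓝 (|τ - τ| * (4 * C / τ))) :=
        Continuous.tendsto (by fun_prop) τ
      simpa using this
    refine squeeze_zero' (Eventually.of_forall fun x => sq_nonneg _) ?_ hb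
    filter_upwards [hpos] with x hx
    have hm := aux_mono (hmin τ hτ) (hmin x (by linarith))
    have hle : poffdiag (Lhat x - Lhat τ) i j ^ 2 ≤
        ∑ i, ∑ j, poffdiag (Lhat x - Lhat τ) i j ^ 2 := by
      refine le_trans ?_ (Finset.single_le_sum
        (f := fun i => ∑ j, poffdiag (Lhat x - Lhat τ) i j ^ 2)
        (fun i _ => by positivity) (Finset.mem_univ i))
      exact Finset.single_le_sum
        (f := fun j => poffdiag (Lhat x - Lhat τ) i j ^ 2)
        (fun i _ => by positivity) (Finset.mem_univ j)
    refine hle.trans (hm.trans ((le_abs_self _).trans ?_))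
    rw [abs_mul]
    refine mul_le_mul_of_nonneg_left ?_ (abs_nonneg _)
    have a1 := hbd x hx
    have a2 := hbd τ (by linarith)
    have a3 := abs_sub (Lhat x).trace (Lhat τ).trace
    have a4 : 4 * C / τ = 2 * C / τ + 2 * C / τ := by ring
    linarith
  have hoff : Tendsto (fun x => poffdiag (Lhat x - Lhat τ)) (𝓝 τ) (𝓝 0) := by
    refine aux_tm fun i j => ?_
    have h1 := (hoffsq i j).sqrt
    simp only [Real.sqrt_sq_eq_abs, Real.sqrt_zero] at h1
    exact (tendsto_zero_iff_abs_tendsto_zero _).2 h1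
  have hG : Tendsto (fun x => auxG x S (Lhat x)) (𝓝 τ) (𝓝 (auxG τ S (Lhat τ))) := by
    have e : (fun x => auxG x S (Lhat x)) = fun x =>
        auxG τ S (Lhat τ) + (x - τ) • (1 : Matrix (Fin p) (Fin p) ℝ)
          + poffdiag (Lhat x - Lhat τ) := by
      funext x
      ext i j
      by_cases hij : i = j <;> simp [auxG, poffdiag, pdiag, hij]
    rw [e]
    have h1 : Tendsto (fun x => auxG τ S (Lhat τ) + (x - τ) • (1 : Matrix (Fin p) (Fin p) ℝ))
        (𝓝 τ) (𝓝 (auxG τ S (Lhat τ) + (τ - τ) • (1 : Matrix (Fin p) (Fin p) ℝ))) :=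
      Continuous.tendsto (by fun_prop) τ
    have := h1.add hoff
    simpa using this
  have hdiag : ∀ i, Tendsto (fun x => Lhat x i i) (𝓝 τ) (𝓝 (Lhat τ i i)) := by
    intro i
    have hA : Tendsto (fun x => (auxG x S (Lhat x) * Lhat τ
        + auxG x S (Lhat x) * poffdiag (Lhat x - Lhat τ)) ) (𝓝 τ)
        (𝓝 (auxG τ S (Lhat τ) * Lhat τ + auxG τ S (Lhat τ) * 0)) :=
      (hG.mul tendsto_const_nhds).add (hG.mul hoff)
    rw [aux_GL hS (hmin τ hτ), mul_zero, add_zero] at hA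
    have hAi := aux_te hA i i
    have hq := (tendsto_const_nhds (x := Lhat τ i i)).sub (hAi.div hid hτ.ne')
    simp only [Matrix.zero_apply, zero_div, sub_zero] at hq
    refine hq.congr' ?_
    filter_upwards [hpos] with x hx
    have hx0 : 0 < x := by linarith
    have hGL := aux_GL hS (hmin x hx0)
    have hdec : Lhat τ + poffdiag (Lhat x - Lhat τ) = Lhat x - pdiag (Lhat x - Lhat τ) := by
      rw [poffdiag]; abel
    have e1 : (auxG x S (Lhat x) * pdiag (Lhat x - Lhat τ)) i i
        = x * (Lhat x i i - Lhat τ i i) := by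
      rw [mul_apply, Finset.sum_eq_single i]
      · simp [auxG, poffdiag, pdiag]
      · intro b _ hb
        simp [pdiag, hb]
      · simp
    change Lhat τ i i - (auxG x S (Lhat x) * Lhat τ +
      auxG x S (Lhat x) * poffdiag (Lhat x - Lhat τ)) i i / x = Lhat x i i
    rw [← mul_add, hdec, mul_sub, hGL, zero_sub, Matrix.neg_apply, e1]
    field_simp
    ring
  refine aux_tm fun i j => ?_
  by_cases hij : i = j
  · subst hij; exact hdiag i
  · have h1 := aux_te hoff i j
    have h2 := h1.add_const (Lhat τ i j)
    simpa [poffdiag, pdiag, hij] using h2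

/-- the relaxed-MTFA solution map `τ ↦ (L̂(τ), D̂(τ))` is continuous on
`(0, ∞)`. -/
theorem rmtfa_solution_continuous (p : ℕ) (S : Matrix (Fin p) (Fin p) ℝ)
    (hS : S.IsHermitian)
    (Lhat Dhat : ℝ → Matrix (Fin p) (Fin p) ℝ)
    (hmin : ∀ τ : ℝ, 0 < τ → IsRMTFAMin τ S (Lhat τ) (Dhat τ)) :
    ∀ τ : ℝ, 0 < τ → ∀ ε : ℝ, 0 < ε → ∃ δ : ℝ, 0 < δ ∧
      ∀ τ' : ℝ, 0 < τ' → |τ' - τ| < δ →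
        Real.sqrt ((frobNorm (Lhat τ' - Lhat τ)) ^ 2 +
          (frobNorm (Dhat τ' - Dhat τ)) ^ 2) < ε := by
  intro τ hτ ε hε
  have hL := aux_tendsto hS hmin hτ
  have hc : Continuous (fun L : Matrix (Fin p) (Fin p) ℝ =>
      Real.sqrt ((frobNorm (L - Lhat τ)) ^ 2 +
        (frobNorm (pdiag (S - L) - pdiag (S - Lhat τ))) ^ 2)) := by
    simp only [aux_frob]
    refine Real.continuous_sqrt.comp (Continuous.add ?_ ?_)
    · refine continuous_finsetSum _ fun i _ => continuous_finsetSum _ fun j _ => ?_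
      have : Continuous fun L : Matrix (Fin p) (Fin p) ℝ => L i j := continuous_id.matrix_elem i j
      simp only [Matrix.sub_apply]
      fun_prop
    · refine continuous_finsetSum _ fun i _ => continuous_finsetSum _ fun j _ => ?_
      have : Continuous fun L : Matrix (Fin p) (Fin p) ℝ => L i j := continuous_id.matrix_elem i j
      by_cases hij : i = j
      · simp only [Matrix.sub_apply, pdiag, of_apply, if_pos hij]
        fun_prop
      · simp only [Matrix.sub_apply, pdiag, of_apply, if_neg hij]
        fun_prop
  have ht := (hc.tendsto (Lhat τ)).comp hL
  have h0 : Real.sqrt ((frobNorm (Lhat τ - Lhat τ)) ^ 2 +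
        (frobNorm (pdiag (S - Lhat τ) - pdiag (S - Lhat τ))) ^ 2) = 0 := by
    simp [aux_frob]
  rw [h0] at ht
  have hev := ht.eventually (gt_mem_nhds hε)
  obtain ⟨δ, hδ, hball⟩ := Metric.eventually_nhds_iff.1 hev
  refine ⟨δ, hδ, fun τ' hτ' hd => ?_⟩
  have := hball (show dist τ' τ < δ by rwa [Real.dist_eq])
  rw [aux_diag (hmin τ' hτ'), aux_diag (hmin τ hτ)]
  exact this
end
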